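/- Let S be a finite set and let P and Q be two distinct stochastic S×S matrices which are both irreducible and aperiodic and have the same support, i.e. P(s,t) = 0 if and only if Q(s,t) = 0 for all s,t ∈ S. Then there exist an integer L ≥ 1, elements α, β ∈ S, and two finite paths [b_1, …, b_L] and [b'_1, …, b'_L] in S, both admissible for P (all transitions α→b_1, b_1→b_2, …, b_{L−1}→b_L, b_L→β, and likewise for the primed path, have positive P-probability), such that ( P(α,b_1)P(b_1,b_2)⋯P(b_{L−1},b_L)P(b_L,β) ) / ( P(α,b'_1)P(b'_1,b'_2)⋯P(b'_{L−1},b'_L)P(b'_L,β) ) ≠ ( Q(α,b_1)Q(b_1,b_2)⋯Q(b_{L−1},b_L)Q(b_L,β) ) / ( Q(α,b'_1)Q(b'_1,b'_2)⋯Q(b'_{L−1},b'_L)Q(b'_L,β) ). -/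

import Mathlib

/-!
Let `g = P / Q` on the common support and suppose that the product of `g` along a path depends only
on its endpoints and its length. Since `P` is irreducible, the product along closed paths through
a state `α` is multiplicative in the length, hence equal to `c ^ length` for some `c > 0`.
Dividing by `c ^ length`, the product along paths out of `α` becomes a function `h` of the endpoint,
and `P s t * h s = c * h t * Q s t`. Summing over `t` gives `h = c * Q h`; comparing both sides at a
maximum and at a minimum of `h` forces `c = 1`, so `h` is harmonic for `Q`, hence constant by the
maximum principle, and `P = Q`.
-/

open Filter Topology

namespace CombinatorialLemma

/-- A stochastic matrix over the finite state space `S`. -/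
def IsStochastic {S : Type*} [Fintype S] (P : S → S → ℝ) : Prop :=
  (∀ s t, 0 ≤ P s t) ∧ ∀ s, ∑ t, P s t = 1

/-- Matrix multiplication for `S × S` matrices given as functions. -/
noncomputable def matMul {S : Type*} [Fintype S] (P Q : S → S → ℝ) : S → S → ℝ :=
  fun s t => ∑ u, P s u * Q u t

/-- Matrix powers. -/
noncomputable def matPow {S : Type*} [Fintype S] [DecidableEq S]
    (P : S → S → ℝ) : ℕ → S → S → ℝ
  | 0 => fun s t => if s = t then 1 else 0
  | k + 1 => matMul (matPow P k) P

open Quiver (IsSStronglyConnected)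
open Quiver.Path

section PathWeights

variable {V : Type*} [Quiver V]

lemma weightOfEPs_pos_of_edge {R : Type*} [Semiring R] [LinearOrder R] [IsStrictOrderedRing R]
    {w : V → V → R} (hw : ∀ ⦃a b : V⦄, (a ⟶ b) → 0 < w a b) {a b : V} (p : Quiver.Path a b) :
    0 < weightOfEPs w p :=
  weight_pos (fun e => hw e) p

lemma weightOfEPs_div {M : Type*} [DivisionCommMonoid M] (v w : V → V → M) {a b : V}
    (p : Quiver.Path a b) :
    weightOfEPs (fun s t => v s t / w s t) p = weightOfEPs v p / weightOfEPs w p := by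
  induction p with
  | nil => simp only [weightOfEPs_nil, div_one]
  | cons p e ih => simp only [weightOfEPs_cons, ih, div_mul_div_comm]

lemma weightOfEPs_eq_of_length_le_one {M : Type*} [Monoid M] (w : V → V → M) {a b : V}
    (p q : Quiver.Path a b) (hpq : p.length = q.length) (hp : p.length ≤ 1) :
    weightOfEPs w p = weightOfEPs w q := by
  rcases Nat.le_one_iff_eq_zero_or_eq_one.1 hp with h | h
  · obtain rfl := eq_of_length_zero p h
    rw [eq_nil_of_length_zero p h, eq_nil_of_length_zero q (hpq ▸ h)]
  · have weight_eq : ∀ r : Quiver.Path a b, r.length = 1 → weightOfEPs w r = w a b := by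
      rintro (_ | ⟨r, e⟩) hr
      · simp at hr
      · have hr₀ : r.length = 0 := Nat.succ.inj hr
        obtain rfl := eq_of_length_zero r hr₀
        rw [eq_nil_of_length_zero r hr₀, weightOfEPs_cons, weightOfEPs_nil, one_mul]
    rw [weight_eq p h, weight_eq q (hpq ▸ h)]

lemma exists_closed_path_weight_eq_pow {M : Type*} [Monoid M] (w : V → V → M) {a : V}
    (p : Quiver.Path a a) (n : ℕ) :
    ∃ q : Quiver.Path a a, q.length = p.length * n ∧ weightOfEPs w q = weightOfEPs w p ^ n := by
  induction n with
  | zero => exact ⟨nil, rfl, by rw [weightOfEPs_nil, pow_zero]⟩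
  | succ n ih =>
    obtain ⟨q, hlen, hweight⟩ := ih
    exact ⟨q.comp p, by rw [length_comp, hlen, Nat.mul_succ],
      by rw [weightOfEPs_comp, hweight, pow_succ]⟩

lemma exists_vertex_seq {M : Type*} [CommMonoid M] {a b : V} (p : Quiver.Path a b) :
    ∃ x : ℕ → V, x 0 = a ∧ x p.length = b ∧ (∀ i < p.length, Nonempty (x i ⟶ x (i + 1))) ∧
      ∀ w : V → V → M, weightOfEPs w p = ∏ i ∈ Finset.range p.length, w (x i) (x (i + 1)) := by
  induction p with
  | nil => exact ⟨fun _ => a, by simp [weightOfEPs_nil]⟩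
  | @cons b c p e ih =>
    obtain ⟨x, hx₀, hx_last, hx_edge, hx_weight⟩ := ih
    let y : ℕ → V := fun i => if i ≤ p.length then x i else c
    have y_eq : ∀ i ≤ p.length, y i = x i := fun i hi => if_pos hi
    have y_last : y (p.length + 1) = c := if_neg (by omega)
    refine ⟨y, by rw [y_eq 0 (Nat.zero_le _), hx₀], y_last, fun i hi => ?_, fun w => ?_⟩
    · rcases Nat.lt_succ_iff_lt_or_eq.1 hi with hi | rfl
      · rw [y_eq i hi.le, y_eq (i + 1) hi]
        exact hx_edge i hi
      · rw [y_eq _ le_rfl, hx_last, y_last]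
        exact ⟨e⟩
    · have prefix_eq : ∏ i ∈ Finset.range p.length, w (y i) (y (i + 1)) = weightOfEPs w p := by
        rw [hx_weight w]
        refine Finset.prod_congr rfl fun i hi => ?_
        have hi : i < p.length := Finset.mem_range.1 hi
        rw [y_eq i hi.le, y_eq (i + 1) hi]
      rw [weightOfEPs_cons, length_cons, Finset.prod_range_succ, prefix_eq, y_eq _ le_rfl, hx_last,
        y_last]

lemma exists_interior_vertices {M : Type*} [CommMonoid M] {a b : V} {L : ℕ} (hL : 1 ≤ L)
    (p : Quiver.Path a b) (hp : p.length = L + 1) :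
    ∃ x : ℕ → V, Nonempty (a ⟶ x 1) ∧ (∀ i, 1 ≤ i → i < L → Nonempty (x i ⟶ x (i + 1))) ∧
      Nonempty (x L ⟶ b) ∧
      ∀ w : V → V → M,
        w a (x 1) * (∏ i ∈ Finset.Ico 1 L, w (x i) (x (i + 1))) * w (x L) b = weightOfEPs w p := by
  obtain ⟨x, rfl, hx_last, hx_edge, hx_weight⟩ := exists_vertex_seq (M := M) p
  rw [hp] at hx_last hx_edge
  subst hx_last
  refine ⟨x, hx_edge 0 (by omega), fun i _ hi => hx_edge i (by omega), hx_edge L (by omega),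
    fun w => ?_⟩
  rw [hx_weight, hp, Finset.prod_range_succ, Finset.prod_range_eq_mul_Ico _ hL]

end PathWeights

section Potential

variable {V : Type*} [Quiver V]

/-- The weight of a path depends only on its endpoints and its length. For the edge weights `P / Q`
this says that no pair of paths distinguishes `P` from `Q`. -/
def WeightDeterminedByLength {M : Type*} [Monoid M] (w : V → V → M) : Prop :=
  ∀ ⦃a b : V⦄ (p q : Quiver.Path a b), p.length = q.length → weightOfEPs w p = weightOfEPs w q

lemma WeightDeterminedByLength.weight_pow_length_comm {M : Type*} [Monoid M] {w : V → V → M}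
    (h : WeightDeterminedByLength w) {a : V} (p q : Quiver.Path a a) :
    weightOfEPs w p ^ q.length = weightOfEPs w q ^ p.length := by
  obtain ⟨p', hp'_len, hp'_weight⟩ := exists_closed_path_weight_eq_pow w p q.length
  obtain ⟨q', hq'_len, hq'_weight⟩ := exists_closed_path_weight_eq_pow w q p.length
  rw [← hp'_weight, ← hq'_weight]
  exact h p' q' (by rw [hp'_len, hq'_len, mul_comm])

lemma WeightDeterminedByLength.exists_weight_eq_pow_length {w : V → V → ℝ}
    (h : WeightDeterminedByLength w) (hw : ∀ ⦃a b : V⦄, (a ⟶ b) → 0 < w a b) {a : V}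
    (p₀ : Quiver.Path a a) (hp₀ : 0 < p₀.length) :
    ∃ c : ℝ, 0 < c ∧ ∀ p : Quiver.Path a a, weightOfEPs w p = c ^ p.length := by
  have closed_pos {p : Quiver.Path a a} : 0 < weightOfEPs w p := weightOfEPs_pos_of_edge hw p
  let c : ℝ := weightOfEPs w p₀ ^ (p₀.length : ℝ)⁻¹
  have c_pos : 0 < c := Real.rpow_pos_of_pos closed_pos _
  have c_pow : c ^ p₀.length = weightOfEPs w p₀ :=
    Real.rpow_inv_natCast_pow closed_pos.le hp₀.ne'
  refine ⟨c, c_pos, fun p => ?_⟩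
  rw [← pow_left_inj₀ closed_pos.le (pow_pos c_pos _).le hp₀.ne', h.weight_pow_length_comm,
    ← c_pow, pow_right_comm]

lemma weight_div_pow_length_eq {K : Type*} [Field K] {w : V → V → K} {c : K} (hc : c ≠ 0)
    {a b : V} (hclosed : ∀ p : Quiver.Path a a, weightOfEPs w p = c ^ p.length)
    (p q : Quiver.Path a b) (r : Quiver.Path b a) :
    weightOfEPs w p / c ^ p.length = weightOfEPs w q / c ^ q.length := by
  have closed_comp (p : Quiver.Path a b) :
      weightOfEPs w p * weightOfEPs w r = c ^ p.length * c ^ r.length := by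
    rw [← weightOfEPs_comp, hclosed, length_comp, pow_add]
  have hr : weightOfEPs w r ≠ 0 := by
    have hne : weightOfEPs w p * weightOfEPs w r ≠ 0 := by
      rw [closed_comp]
      exact mul_ne_zero (pow_ne_zero _ hc) (pow_ne_zero _ hc)
    exact right_ne_zero_of_mul hne
  rw [div_eq_div_iff (pow_ne_zero _ hc) (pow_ne_zero _ hc)]
  refine mul_right_cancel₀ hr ?_
  linear_combination c ^ q.length * closed_comp p - c ^ p.length * closed_comp q

lemma WeightDeterminedByLength.exists_potential [Nonempty V] {w : V → V → ℝ}
    (h : WeightDeterminedByLength w) (hw : ∀ ⦃a b : V⦄, (a ⟶ b) → 0 < w a b)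
    (hV : IsSStronglyConnected V) :
    ∃ (c : ℝ) (φ : V → ℝ), 0 < c ∧ (∀ a, 0 < φ a) ∧
      ∀ ⦃a b : V⦄, (a ⟶ b) → w a b * φ a = c * φ b := by
  obtain ⟨o⟩ := ‹Nonempty V›
  obtain ⟨p₀, hp₀⟩ := hV o o
  obtain ⟨c, hc, hclosed⟩ := h.exists_weight_eq_pow_length hw p₀ hp₀
  choose p _ using fun a => hV o a
  refine ⟨c, fun a => weightOfEPs w (p a) / c ^ (p a).length, hc,
    fun a => div_pos (weightOfEPs_pos_of_edge hw _) (pow_pos hc _), fun a b e => ?_⟩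
  obtain ⟨r, -⟩ := hV b o
  have extend := weight_div_pow_length_eq hc.ne' hclosed ((p a).cons e) (p b) r
  rw [weightOfEPs_cons, length_cons] at extend
  change w a b * (weightOfEPs w (p a) / c ^ (p a).length) =
    c * (weightOfEPs w (p b) / c ^ (p b).length)
  rw [← extend, pow_succ]
  field_simp

end Potential

section MaximumPrinciple

variable {S : Type*} [Fintype S] {P Q : S → S → ℝ}

lemma IsStochastic.sum_mul_const (hQ : IsStochastic Q) (s : S) (M : ℝ) : ∑ t, Q s t * M = M := by
  rw [← Finset.sum_mul, hQ.2 s, one_mul]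

lemma IsStochastic.sum_mul_mono (hQ : IsStochastic Q) {f h : S → ℝ} (hfh : ∀ t, f t ≤ h t) (s : S) :
    ∑ t, Q s t * f t ≤ ∑ t, Q s t * h t :=
  Finset.sum_le_sum fun t _ => mul_le_mul_of_nonneg_left (hfh t) (hQ.1 s t)

lemma IsStochastic.eq_one_of_mul_sum_eq [Nonempty S] (hQ : IsStochastic Q) {h : S → ℝ}
    (hh : ∀ s, 0 < h s) {c : ℝ} (hc : 0 < c) (heig : ∀ s, c * ∑ t, Q s t * h t = h s) :
    c = 1 := by
  obtain ⟨a, ha⟩ := Finite.exists_max h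
  obtain ⟨b, hb⟩ := Finite.exists_min h
  have le_at_max : 1 * h a ≤ c * h a := by
    calc 1 * h a = c * ∑ t, Q a t * h t := by rw [heig, one_mul]
      _ ≤ c * ∑ t, Q a t * h a := mul_le_mul_of_nonneg_left (hQ.sum_mul_mono ha a) hc.le
      _ = c * h a := by rw [hQ.sum_mul_const]
  have le_at_min : c * h b ≤ 1 * h b := by
    calc c * h b = c * ∑ t, Q b t * h b := by rw [hQ.sum_mul_const]
      _ ≤ c * ∑ t, Q b t * h t := mul_le_mul_of_nonneg_left (hQ.sum_mul_mono hb b) hc.le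
      _ = 1 * h b := by rw [heig, one_mul]
  exact le_antisymm (le_of_mul_le_mul_right le_at_min (hh b))
    (le_of_mul_le_mul_right le_at_max (hh a))

lemma IsStochastic.eq_of_harmonic_of_forall_le (hQ : IsStochastic Q) {h : S → ℝ} {s t : S}
    (hharm : ∑ u, Q s u * h u = h s) (hmax : ∀ u, h u ≤ h s) (hst : 0 < Q s t) : h t = h s := by
  have sum_gap : ∑ u, Q s u * (h s - h u) = 0 := by
    simp only [mul_sub, Finset.sum_sub_distrib, hQ.sum_mul_const, hharm, sub_self]
  have gap_zero : Q s t * (h s - h t) = 0 :=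
    (Finset.sum_eq_zero_iff_of_nonneg fun u _ =>
      mul_nonneg (hQ.1 s u) (sub_nonneg.2 (hmax u))).1 sum_gap t (Finset.mem_univ t)
  exact (sub_eq_zero.1 ((mul_eq_zero.1 gap_zero).resolve_left hst.ne')).symm

lemma IsStochastic.eq_of_harmonic [Quiver S] (hS : IsSStronglyConnected S) (hQ : IsStochastic Q)
    (hQedge : ∀ ⦃s t : S⦄, (s ⟶ t) → 0 < Q s t) {h : S → ℝ}
    (hharm : ∀ s, ∑ t, Q s t * h t = h s) (s t : S) : h s = h t := by
  have : Nonempty S := ⟨s⟩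
  obtain ⟨a, ha⟩ := Finite.exists_max h
  have propagate {u : S} (p : Quiver.Path a u) : h u = h a := by
    induction p with
    | nil => rfl
    | @cons u v _ e ih =>
      rw [← ih]
      exact hQ.eq_of_harmonic_of_forall_le (hharm u) (fun x => ih ▸ ha x) (hQedge e)
  obtain ⟨p, -⟩ := hS a s
  obtain ⟨q, -⟩ := hS a t
  rw [propagate p, propagate q]

lemma IsStochastic.eq_of_conjugate [Quiver S] (hS : IsSStronglyConnected S)
    (hP : IsStochastic P) (hQ : IsStochastic Q) (hQedge : ∀ ⦃s t : S⦄, (s ⟶ t) → 0 < Q s t)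
    {h : S → ℝ} (hh : ∀ s, 0 < h s) {c : ℝ} (hc : 0 < c)
    (hPQ : ∀ s t, P s t * h s = c * h t * Q s t) : P = Q := by
  have heig (s : S) : c * ∑ t, Q s t * h t = h s := by
    calc c * ∑ t, Q s t * h t = ∑ t, P s t * h s := by
          rw [Finset.mul_sum]
          exact Finset.sum_congr rfl fun t _ => by rw [hPQ]; ring
      _ = h s := hP.sum_mul_const s (h s)
  funext s t
  have : Nonempty S := ⟨s⟩
  obtain rfl : c = 1 := hQ.eq_one_of_mul_sum_eq hh hc heig
  simp only [one_mul] at heig hPQ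
  have hst := hPQ s t
  rw [← hQ.eq_of_harmonic hS hQedge heig s t, mul_comm] at hst
  exact mul_left_cancel₀ (hh s).ne' hst

end MaximumPrinciple

section Rigidity

variable {S : Type*} [Fintype S] {P Q : S → S → ℝ}

lemma IsStochastic.eq_of_weightDeterminedByLength_div [Quiver S] (hS : IsSStronglyConnected S)
    (hP : IsStochastic P) (hQ : IsStochastic Q) (hPedge : ∀ s t : S, Nonempty (s ⟶ t) ↔ 0 < P s t)
    (hQedge : ∀ s t : S, Nonempty (s ⟶ t) ↔ 0 < Q s t)
    (hdet : WeightDeterminedByLength fun s t => P s t / Q s t) : P = Q := by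
  have Q_pos ⦃s t : S⦄ (e : s ⟶ t) : 0 < Q s t := (hQedge s t).1 ⟨e⟩
  have ratio_pos ⦃s t : S⦄ (e : s ⟶ t) : 0 < P s t / Q s t :=
    div_pos ((hPedge s t).1 ⟨e⟩) (Q_pos e)
  cases isEmpty_or_nonempty S
  · exact Subsingleton.elim P Q
  obtain ⟨c, h, hc, hh, hPQ⟩ := hdet.exists_potential ratio_pos hS
  refine hP.eq_of_conjugate hS hQ Q_pos hh hc fun s t => ?_
  rcases isEmpty_or_nonempty (s ⟶ t) with hst | ⟨⟨e⟩⟩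
  · rw [← not_nonempty_iff] at hst
    have hPst : P s t = 0 := (hP.1 s t).eq_of_not_lt' (mt (hPedge s t).2 hst)
    have hQst : Q s t = 0 := (hQ.1 s t).eq_of_not_lt' (mt (hQedge s t).2 hst)
    rw [hPst, hQst, zero_mul, mul_zero]
  · rw [← hPQ e, mul_right_comm, div_mul_cancel₀ _ (Q_pos e).ne']

lemma IsStochastic.exists_weight_ratio_ne [Quiver S] (hS : IsSStronglyConnected S)
    (hP : IsStochastic P) (hQ : IsStochastic Q) (hPedge : ∀ s t : S, Nonempty (s ⟶ t) ↔ 0 < P s t)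
    (hQedge : ∀ s t : S, Nonempty (s ⟶ t) ↔ 0 < Q s t) (hne : P ≠ Q) :
    ∃ (α β : S) (p q : Quiver.Path α β), p.length = q.length ∧ 1 < p.length ∧
      weightOfEPs P p / weightOfEPs P q ≠ weightOfEPs Q p / weightOfEPs Q q := by
  have not_determined : ¬ WeightDeterminedByLength fun s t => P s t / Q s t := fun hdet =>
    hne (hP.eq_of_weightDeterminedByLength_div hS hQ hPedge hQedge hdet)
  simp only [WeightDeterminedByLength, not_forall] at not_determined
  obtain ⟨α, β, p, q, hlen, hratio⟩ := not_determined
  refine ⟨α, β, p, q, hlen, ?_, fun heq => hratio ?_⟩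
  · by_contra! hp
    exact hratio (weightOfEPs_eq_of_length_le_one _ p q hlen hp)
  · have weightP_pos (r : Quiver.Path α β) : 0 < weightOfEPs P r :=
      weightOfEPs_pos_of_edge (fun _ _ e => (hPedge _ _).1 ⟨e⟩) r
    have weightQ_pos (r : Quiver.Path α β) : 0 < weightOfEPs Q r :=
      weightOfEPs_pos_of_edge (fun _ _ e => (hQedge _ _).1 ⟨e⟩) r
    rw [div_eq_div_iff (weightP_pos q).ne' (weightQ_pos q).ne'] at heq
    rw [weightOfEPs_div, weightOfEPs_div,
      div_eq_div_iff (weightQ_pos p).ne' (weightQ_pos q).ne', heq, mul_comm]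

end Rigidity

section Irreducibility

variable {S : Type*} [Fintype S] {P : S → S → ℝ}

lemma matPow_eq_of_pow [DecidableEq S] (P : S → S → ℝ) (k : ℕ) :
    matPow P k = (Matrix.of P) ^ k := by
  induction k with
  | zero => funext s t; simp only [matPow, pow_zero, Matrix.one_apply]
  | succ k ih =>
    funext s t
    simp only [matPow, matMul, ih, pow_succ, Matrix.mul_apply, Matrix.of_apply]

lemma IsStochastic.exists_pos (hP : IsStochastic P) (s : S) : ∃ t, 0 < P s t := by
  have sum_pos : 0 < ∑ t, P s t := by rw [hP.2 s]; exact one_pos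
  obtain ⟨t, -, ht⟩ := (Finset.sum_pos_iff_of_nonneg fun t _ => hP.1 s t).1 sum_pos
  exact ⟨t, ht⟩

lemma IsStochastic.isIrreducible_of_matPow_pos [DecidableEq S] (hP : IsStochastic P)
    (h : ∀ s t, ∃ k, 0 < matPow P k s t) : (Matrix.of P).IsIrreducible := by
  refine ⟨hP.1, fun s t => ?_⟩
  let := (Matrix.of P).toQuiver
  -- The power may be `P ^ 0`, so an edge is prepended to obtain a path of positive length.
  obtain ⟨u, hsu⟩ := hP.exists_pos s
  obtain ⟨k, hk⟩ := h u t
  rw [matPow_eq_of_pow] at hk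
  obtain ⟨p, -⟩ := (Matrix.pow_apply_pos_iff_nonempty_path (A := Matrix.of P) hP.1 k u t).1 hk
  have e : s ⟶ u := PLift.up hsu
  exact ⟨e.toPath.comp p, by rw [length_comp, length_toPath]; omega⟩

end Irreducibility

theorem exists_paths_with_different_weight_ratios_general
    {S : Type*} [Fintype S]
    (P Q : S → S → ℝ) (hP : IsStochastic P) (hQ : IsStochastic Q)
    (hirr : (Matrix.of P).IsIrreducible)
    (hsupp : ∀ s t : S, P s t = 0 ↔ Q s t = 0)
    (hne : P ≠ Q) :
    ∃ (L : ℕ), 1 ≤ L ∧ ∃ (α β : S) (b b' : ℕ → S),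
      (0 < P α (b 1)) ∧ (∀ i, 1 ≤ i → i < L → 0 < P (b i) (b (i + 1))) ∧
        (0 < P (b L) β) ∧
      (0 < P α (b' 1)) ∧ (∀ i, 1 ≤ i → i < L → 0 < P (b' i) (b' (i + 1))) ∧
        (0 < P (b' L) β) ∧
      (P α (b 1) * (∏ i ∈ Finset.Ico 1 L, P (b i) (b (i + 1))) * P (b L) β) /
          (P α (b' 1) * (∏ i ∈ Finset.Ico 1 L, P (b' i) (b' (i + 1))) * P (b' L) β)
        ≠
      (Q α (b 1) * (∏ i ∈ Finset.Ico 1 L, Q (b i) (b (i + 1))) * Q (b L) β) /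
          (Q α (b' 1) * (∏ i ∈ Finset.Ico 1 L, Q (b' i) (b' (i + 1))) * Q (b' L) β) := by
  let := (Matrix.of P).toQuiver
  have hPedge (s t : S) : Nonempty (s ⟶ t) ↔ 0 < P s t :=
    ⟨fun ⟨e⟩ => e.down, fun h => ⟨PLift.up h⟩⟩
  have hQedge (s t : S) : Nonempty (s ⟶ t) ↔ 0 < Q s t := by
    rw [hPedge, (hP.1 s t).lt_iff_ne', (hQ.1 s t).lt_iff_ne']
    exact (hsupp s t).not
  obtain ⟨α, β, p, q, hlen, hp, hratio⟩ :=
    hP.exists_weight_ratio_ne hirr.connected hQ hPedge hQedge hne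
  obtain ⟨L, hL⟩ : ∃ L, p.length = L + 1 := Nat.exists_eq_succ_of_ne_zero (by omega)
  have hL₁ : 1 ≤ L := by omega
  obtain ⟨b, hb_first, hb_step, hb_last, hb_weight⟩ :=
    exists_interior_vertices (M := ℝ) hL₁ p hL
  obtain ⟨b', hb'_first, hb'_step, hb'_last, hb'_weight⟩ :=
    exists_interior_vertices (M := ℝ) hL₁ q (hlen ▸ hL)
  simp only [hPedge] at hb_first hb_step hb_last hb'_first hb'_step hb'_last
  refine ⟨L, hL₁, α, β, b, b', hb_first, hb_step, hb_last, hb'_first, hb'_step, hb'_last, ?_⟩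
  rwa [hb_weight P, hb_weight Q, hb'_weight P, hb'_weight Q]

/-- **Combinatorial lemma.**
Let `P ≠ Q` be irreducible and aperiodic stochastic matrices with the same
support. Then there are `L ≥ 1`, states `α, β` and two `P`-admissible paths
`[b_1, …, b_L]`, `[b'_1, …, b'_L]` from `α` to `β` such that the `P`-weight ratio
of the two paths differs from their `Q`-weight ratio. -/
theorem exists_paths_with_different_weight_ratios
    {S : Type*} [Fintype S] [DecidableEq S]
    (P Q : S → S → ℝ) (hP : IsStochastic P) (hQ : IsStochastic Q)
    (hPprim : ∃ k : ℕ, ∀ s t : S, 0 < matPow P k s t)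
    (hQprim : ∃ k : ℕ, ∀ s t : S, 0 < matPow Q k s t)
    (hsupp : ∀ s t : S, P s t = 0 ↔ Q s t = 0)
    (hne : P ≠ Q) :
    ∃ (L : ℕ), 1 ≤ L ∧ ∃ (α β : S) (b b' : ℕ → S),
      (0 < P α (b 1)) ∧ (∀ i, 1 ≤ i → i < L → 0 < P (b i) (b (i + 1))) ∧
        (0 < P (b L) β) ∧
      (0 < P α (b' 1)) ∧ (∀ i, 1 ≤ i → i < L → 0 < P (b' i) (b' (i + 1))) ∧
        (0 < P (b' L) β) ∧
      (P α (b 1) * (∏ i ∈ Finset.Ico 1 L, P (b i) (b (i + 1))) * P (b L) β) /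
          (P α (b' 1) * (∏ i ∈ Finset.Ico 1 L, P (b' i) (b' (i + 1))) * P (b' L) β)
        ≠
      (Q α (b 1) * (∏ i ∈ Finset.Ico 1 L, Q (b i) (b (i + 1))) * Q (b L) β) /
          (Q α (b' 1) * (∏ i ∈ Finset.Ico 1 L, Q (b' i) (b' (i + 1))) * Q (b' L) β) := by
  obtain ⟨k, hk⟩ := hPprim
  exact exists_paths_with_different_weight_ratios_general P Q hP hQ
    (hP.isIrreducible_of_matPow_pos fun s t => ⟨k, hk s t⟩) hsupp hne

end CombinatorialLemma
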